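/- arXiv:2302.05222 — 3 statements merged into one kernel-verified Lean document; each statement's English description precedes it below -/
import Mathlib

section
/- Let N be a nonempty finite set (the nodes of a cluster), let α : N → ℝ with 0 ≤ α n for all n, let P : N → ℝ with P n ≥ 0 for all n and P := ∑_{n ∈ N} P n > 0, and let p be a real number with 0 ≤ p ≤ (min_{n ∈ N} α n) · P. Then there exist nodal productions p_n ≥ 0 with ∑_{n ∈ N} p_n = p and p_n ≤ α n · P n for every n ∈ N; that is, any aggregated production feasible under the cluster-wide minimum availability can be disaggregated into nodally feasible productions. -/
section ProportionalDispatch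

variable {ι 𝕜 : Type*} [Semifield 𝕜] {N : Finset ι} {P : ι → 𝕜} {p : 𝕜}

/-- The dispatch of a total production `p` over the nodes in `N` in proportion to their nominal
capacities `P`: every node runs at the same utilization `p / ∑ m ∈ N, P m`. It is meaningful only
when the total capacity is nonzero; otherwise the division by zero makes it vanish. -/
def proportionalDispatch (N : Finset ι) (P : ι → 𝕜) (p : 𝕜) (n : ι) : 𝕜 :=
  p / (∑ m ∈ N, P m) * P n

theorem sum_proportionalDispatch (hP : ∑ n ∈ N, P n ≠ 0) :
    ∑ n ∈ N, proportionalDispatch N P p n = p := by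
  simp only [proportionalDispatch, ← Finset.mul_sum, div_mul_cancel₀ p hP]

variable [LinearOrder 𝕜] [IsStrictOrderedRing 𝕜]

theorem proportionalDispatch_nonneg (hP : ∀ n ∈ N, 0 ≤ P n) (hp : 0 ≤ p) {n : ι} (hn : n ∈ N) :
    0 ≤ proportionalDispatch N P p n :=
  mul_nonneg (div_nonneg hp (Finset.sum_nonneg hP)) (hP n hn)

theorem proportionalDispatch_le_mul {a : 𝕜} {n : ι} (hPpos : 0 < ∑ m ∈ N, P m)
    (hp : p ≤ a * ∑ m ∈ N, P m) (hn : 0 ≤ P n) :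
    proportionalDispatch N P p n ≤ a * P n :=
  mul_le_mul_of_nonneg_right ((div_le_iff₀ hPpos).2 hp) hn

theorem min_availability_disaggregation_general (hN : N.Nonempty) (α : ι → 𝕜)
    (hP : ∀ n ∈ N, 0 ≤ P n) (hPpos : 0 < ∑ n ∈ N, P n)
    (hp0 : 0 ≤ p) (hp : p ≤ N.inf' hN α * ∑ n ∈ N, P n) :
    ∃ q : ι → 𝕜, (∀ n ∈ N, 0 ≤ q n) ∧ (∑ n ∈ N, q n = p) ∧ (∀ n ∈ N, q n ≤ α n * P n) := by
  refine ⟨proportionalDispatch N P p, fun n hn ↦ proportionalDispatch_nonneg hP hp0 hn,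
    sum_proportionalDispatch hPpos.ne', fun n hn ↦ ?_⟩
  calc
    proportionalDispatch N P p n ≤ N.inf' hN α * P n :=
      proportionalDispatch_le_mul hPpos hp (hP n hn)
    _ ≤ α n * P n := mul_le_mul_of_nonneg_right (Finset.inf'_le α hn) (hP n hn)

end ProportionalDispatch

/-- Any aggregated production feasible under the cluster-wide minimum
availability can be disaggregated into nodally feasible productions. -/
theorem min_availability_disaggregation {ι : Type*} (N : Finset ι) (hN : N.Nonempty)
    (α P : ι → ℝ)
    (hα : ∀ n ∈ N, 0 ≤ α n) (hP : ∀ n ∈ N, 0 ≤ P n)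
    (hPpos : 0 < ∑ n ∈ N, P n)
    (p : ℝ) (hp0 : 0 ≤ p) (hp : p ≤ (N.inf' hN α) * ∑ n ∈ N, P n) :
    ∃ q : ι → ℝ, (∀ n ∈ N, 0 ≤ q n) ∧ (∑ n ∈ N, q n = p) ∧
      (∀ n ∈ N, q n ≤ α n * P n) :=
  min_availability_disaggregation_general hN α hP hPpos hp0 hp
end

section
/- Let G be a connected finite simple graph on a nonempty vertex set V, and let b : V → ℝ with ∑_{v ∈ V} b v = 0. Then there exists an antisymmetric function f : V → V → ℝ with f u v = 0 whenever u and v are not adjacent in G, such that for every vertex v, ∑_{u ∈ V} f v u = b v, and for all u, v ∈ V, |f u v| ≤ ∑_{w ∈ V} max(b w, 0); that is, any balanced nodal demand/supply pattern can be routed over the edges of a connected graph with the flow on every edge bounded by the total positive demand. -/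
/-!
A flow is sent along a trail by adding up unit flows on its darts; as no edge is repeated, a trail
carrying `x` puts at most `|x|` on each edge. For balanced `b ≠ 0` pick `s` and `t` with
`b t < 0 < b s` and send `ε = min (b s) (-b t)` along a trail from `s` to `t`. What remains of `b`
is balanced, has smaller support, and its total positive part has dropped by exactly `ε`, so the
bound follows by induction on the support.
-/

open Finsupp

section Flow

variable {V R : Type*} [AddCommGroup R] {G : SimpleGraph V}

/-- `IsFlow G f b`: the finitely supported `f` is a flow along the edges of `G`, with `f u v` the
signed amount sent from `u` to `v` and `b v` the net amount leaving `v`. -/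
structure IsFlow (G : SimpleGraph V) (f : V →₀ V →₀ R) (b : V →₀ R) : Prop where
  antisymm : ∀ u v, f u v = -f v u
  eq_zero_of_not_adj : ∀ u v, ¬ G.Adj u v → f u v = 0
  degree_eq : ∀ v, (f v).degree = b v

namespace IsFlow

theorem zero : IsFlow G (0 : V →₀ V →₀ R) 0 where
  antisymm := by simp
  eq_zero_of_not_adj := by simp
  degree_eq := by simp

theorem add {f g : V →₀ V →₀ R} {b c : V →₀ R} (hf : IsFlow G f b) (hg : IsFlow G g c) :
    IsFlow G (f + g) (b + c) where
  antisymm u v := by simp only [Finsupp.add_apply, hf.antisymm u v, hg.antisymm u v, neg_add]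
  eq_zero_of_not_adj u v huv := by
    simp only [Finsupp.add_apply, hf.eq_zero_of_not_adj u v huv,
      hg.eq_zero_of_not_adj u v huv, add_zero]
  degree_eq v := by simp only [Finsupp.add_apply, map_add, hf.degree_eq, hg.degree_eq]

end IsFlow

/-- The flow sending `x` from `u` to `v` directly, recorded with opposite signs at `(u, v)` and
`(v, u)`. -/
noncomputable def edgeFlow (u v : V) (x : R) : V →₀ V →₀ R :=
  single u (single v x) - single v (single u x)

theorem edgeFlow_apply [DecidableEq V] (u v : V) (x : R) (a b : V) :
    edgeFlow u v x a b =
      (if (u, v) = (a, b) then x else 0) - (if (u, v) = (b, a) then x else 0) := by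
  simp only [edgeFlow, Finsupp.sub_apply, single_apply, Prod.mk.injEq, ite_and]
  split_ifs <;> simp_all

theorem isFlow_edgeFlow {u v : V} (h : G.Adj u v) (x : R) :
    IsFlow G (edgeFlow u v x) (single u x - single v x) := by
  classical
  refine ⟨fun a b ↦ ?_, fun a b hab ↦ ?_, fun a ↦ ?_⟩
  · rw [edgeFlow_apply, edgeFlow_apply, neg_sub]
  · have huv : (u, v) ≠ (a, b) := by rintro ⟨⟩; exact hab h
    have hvu : (u, v) ≠ (b, a) := by rintro ⟨⟩; exact hab h.symm
    rw [edgeFlow_apply, if_neg huv, if_neg hvu, sub_zero]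
  · simp only [edgeFlow, Finsupp.sub_apply, map_sub, single_apply, apply_ite degree, degree_single,
      map_zero]

/-- The flow sending `x` along the walk `p`, counting each edge as often as `p` traverses it, with
opposite signs for the two directions. -/
noncomputable def walkFlow {s t : V} (p : G.Walk s t) (x : R) : V →₀ V →₀ R :=
  (p.darts.map fun d ↦ edgeFlow d.fst d.snd x).sum

theorem walkFlow_cons {r s t : V} (h : G.Adj r s) (p : G.Walk s t) (x : R) :
    walkFlow (.cons h p) x = edgeFlow r s x + walkFlow p x := by
  simp [walkFlow]

theorem isFlow_walkFlow {s t : V} (p : G.Walk s t) (x : R) :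
    IsFlow G (walkFlow p x) (single s x - single t x) := by
  induction p with
  | nil => simpa [walkFlow] using IsFlow.zero
  | cons h p ih =>
    rw [walkFlow_cons, ← sub_add_sub_cancel]
    exact (isFlow_edgeFlow h x).add ih

theorem walkFlow_apply [DecidableEq V] {s t : V} (p : G.Walk s t) (x : R) (u v : V) :
    walkFlow p x u v =
      (((p.darts.map (·.toProd)).count (u, v) : ℤ) -
        (p.darts.map (·.toProd)).count (v, u)) • x := by
  induction p with
  | nil => simp [walkFlow]
  | cons h p ih =>
    rw [walkFlow_cons, Finsupp.add_apply, Finsupp.add_apply, edgeFlow_apply, ih]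
    simp only [SimpleGraph.Walk.darts_cons, List.map_cons, List.count_cons, beq_iff_eq]
    split_ifs <;> push_cast <;> module

end Flow

section Ordered

variable {V R : Type*} [AddCommGroup R] [LinearOrder R] [IsOrderedAddMonoid R]

theorem abs_walkFlow_apply_le {G : SimpleGraph V} {s t : V} {p : G.Walk s t} (hp : p.IsTrail)
    (x : R) (u v : V) : |walkFlow p x u v| ≤ |x| := by
  classical
  have hnodup : (p.darts.map (·.toProd)).Nodup :=
    (List.Nodup.of_map _ hp.edges_nodup).map SimpleGraph.Dart.toProd_injective
  have huv := List.nodup_iff_count_le_one.1 hnodup (u, v)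
  have hvu := List.nodup_iff_count_le_one.1 hnodup (v, u)
  rw [walkFlow_apply, abs_zsmul]
  refine (zsmul_le_zsmul_left (abs_nonneg x) (n := 1) ?_).trans_eq (one_zsmul _)
  rw [abs_le]
  lia

theorem posPart_sub_single_sub_single {b : V →₀ R} {s t : V} {ε : R} (hε : 0 ≤ ε)
    (hs : ε ≤ b s) (ht : ε ≤ -b t) :
    (b - (single s ε - single t ε))⁺ = b⁺ - single s ε := by
  classical
  ext v
  change max ((b - (single s ε - single t ε)) v) 0 = max (b v) 0 - single s ε v
  simp only [Finsupp.sub_apply, single_apply]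
  -- At `t` both positive parts vanish; if `s = t`, the bounds force `ε = 0`.
  split_ifs <;> grind

theorem exists_support_sub_single_sub_single_ssubset {b : V →₀ R} (hb : b.degree = 0)
    (hb₀ : b ≠ 0) :
    ∃ s t ε, 0 ≤ ε ∧ ε ≤ b s ∧ ε ≤ -b t ∧
      (b - (single s ε - single t ε)).support ⊂ b.support := by
  classical
  obtain ⟨v, hv⟩ := support_nonempty_iff.2 hb₀
  have hbv : b v ≠ 0 := mem_support_iff.1 hv
  obtain ⟨s, hs, hbs⟩ := b.support.exists_pos_of_sum_zero_of_exists_nonzero b hb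
    ⟨v, hv, hbv⟩
  obtain ⟨t, ht, hbt⟩ := b.support.exists_pos_of_sum_zero_of_exists_nonzero (-b)
    (by simpa [degree_apply] using hb) ⟨v, hv, neg_ne_zero.2 hbv⟩
  have hbt : 0 < -b t := hbt
  have hst : s ≠ t := by rintro rfl; exact hbs.not_gt (neg_pos.1 hbt)
  refine ⟨s, t, min (b s) (-b t), (lt_min hbs hbt).le, min_le_left _ _, min_le_right _ _, ?_⟩
  rw [Finset.ssubset_iff_of_subset]
  · obtain h | h := min_choice (b s) (-b t)
    · exact ⟨s, hs, by simp [h, hst.symm]⟩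
    · exact ⟨t, ht, by simp [h, hst]⟩
  · intro w hw
    contrapose! hw
    have hws : w ≠ s := by rintro rfl; exact hw hs
    have hwt : w ≠ t := by rintro rfl; exact hw ht
    simpa [hws, hwt] using hw

theorem balanced_flow_routing_general {G : SimpleGraph V} (hG : G.Preconnected) (b : V →₀ R)
    (hb : b.degree = 0) :
    ∃ f : V →₀ V →₀ R, IsFlow G f b ∧ ∀ u v, |f u v| ≤ b⁺.degree := by
  induction hS : b.support using Finset.strongInduction generalizing b with
  | H S ih =>
    subst hS
    obtain rfl | hb₀ := eq_or_ne b 0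
    · exact ⟨0, .zero, by simp⟩
    obtain ⟨s, t, ε, hε, hs, ht, hsupp⟩ := exists_support_sub_single_sub_single_ssubset hb hb₀
    obtain ⟨f, hf, hf_le⟩ := ih _ hsupp (b - (single s ε - single t ε)) (by simp [hb]) rfl
    obtain ⟨p, hp⟩ := hG.exists_isPath s t
    refine ⟨f + walkFlow p ε, by simpa using hf.add (isFlow_walkFlow p ε), fun u v ↦ ?_⟩
    calc |f u v + walkFlow p ε u v|
        ≤ |f u v| + |walkFlow p ε u v| := abs_add_le _ _
      _ ≤ (b⁺.degree - ε) + ε := by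
        gcongr
        · simpa [posPart_sub_single_sub_single hε hs ht] using hf_le u v
        · exact (abs_walkFlow_apply_le hp.isTrail ε u v).trans_eq (abs_of_nonneg hε)
      _ = b⁺.degree := sub_add_cancel _ _

end Ordered

/-- Any balanced nodal demand/supply pattern can be routed over the edges of a
connected graph with the flow on every edge bounded by the total positive
demand. -/
theorem balanced_flow_routing {V : Type*} [Fintype V] [Nonempty V]
    (G : SimpleGraph V) (hG : G.Connected)
    (b : V → ℝ) (hb : ∑ v, b v = 0) :
    ∃ f : V → V → ℝ,
      (∀ u v, f u v = - f v u) ∧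
      (∀ u v, ¬ G.Adj u v → f u v = 0) ∧
      (∀ v, ∑ u, f v u = b v) ∧
      (∀ u v, |f u v| ≤ ∑ w, max (b w) 0) := by
  obtain ⟨f, hf, hf_le⟩ := balanced_flow_routing_general hG.preconnected
    (equivFunOnFinite.symm b) (by simpa [degree_eq_sum] using hb)
  exact ⟨fun u v ↦ f u v, hf.antisymm, hf.eq_zero_of_not_adj,
    fun v ↦ (degree_eq_sum _).symm.trans (hf.degree_eq v),
    fun u v ↦ (hf_le u v).trans_eq (degree_eq_sum _)⟩
end

section
/- Let m be a natural number, k : Fin m → ℝ nondecreasing (k i ≤ k j whenever i ≤ j), q : Fin m → ℝ with q i ≥ 0 for all i, and D a real number with 0 ≤ D ≤ ∑_i q i. Define the merit-order dispatch x i = min (q i) (max 0 (D − ∑_{j < i} q j)). Then 0 ≤ x i ≤ q i for all i, ∑_i x i = D, and for every y : Fin m → ℝ with 0 ≤ y i ≤ q i for all i and ∑_i y i = D, one has ∑_i k i · x i ≤ ∑_i k i · y i; that is, dispatching capacities in order of increasing operating cost minimizes total operating cost among all feasible dispatches meeting the demand. -/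
/-! A dispatch in merit order has a market-clearing price `c`, the cost of its cheapest unit with
spare capacity: every unit cheaper than `c` runs at capacity and every unit dearer than `c` is idle.
Measured in the shifted costs `k i - c` it is therefore the cheapest choice unit by unit, and
shifting all costs by `c` changes the cost of every dispatch meeting the demand `D` by the same
amount `c * D`. -/

section ClearingPrice

variable {ι P M : Type*} [LinearOrder P] [Zero M]

/-- The merit-order property of a dispatch `x` of units with costs `k` and capacities `q`: a unit
produces only once every strictly cheaper unit runs at capacity. Units of equal cost may share the
load in any way. -/
def IsMeritOrder (k : ι → P) (q x : ι → M) : Prop :=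
  ∀ ⦃i j⦄, k i < k j → x i = q i ∨ x j = 0

/-- The number `c` is a market-clearing price for the dispatch `x` of units with costs `k` and
capacities `q`, i.e. the Lagrange multiplier of the demand constraint. Units whose cost is exactly
`c` are unconstrained. -/
def IsClearingPrice (k : ι → P) (q x : ι → M) (c : P) : Prop :=
  ∀ i, (k i < c → x i = q i) ∧ (c < k i → x i = 0)

theorem IsMeritOrder.exists_isClearingPrice [Finite ι] [Nonempty P] {k : ι → P} {q x : ι → M}
    (hx : IsMeritOrder k q x) : ∃ c, IsClearingPrice k q x c := by
  rcases {i | x i ≠ q i}.eq_empty_or_nonempty with hfull | hspare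
  · obtain ⟨c, hc⟩ := (Set.finite_range k).bddAbove
    refine ⟨c, fun i => ⟨fun _ => ?_, fun hci => ?_⟩⟩
    · exact not_not.1 (Set.eq_empty_iff_forall_notMem.1 hfull i)
    · exact absurd (hc (Set.mem_range_self i)) hci.not_ge
  · obtain ⟨p, hp, hmin⟩ := Set.exists_min_image _ k (Set.toFinite _) hspare
    exact ⟨k p, fun i => ⟨fun hi => not_not.1 fun hne => (hmin i hne).not_gt hi,
      fun hi => (hx hi).resolve_left hp⟩⟩

end ClearingPrice

section Cost

variable {ι R : Type*} [Fintype ι] [Ring R] [LinearOrder R] [IsOrderedRing R] {k q x y : ι → R}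

theorem IsClearingPrice.sum_mul_le_sum_mul {c : R} (hc : IsClearingPrice k q x c)
    (hy : ∀ i, 0 ≤ y i ∧ y i ≤ q i) (hxy : ∑ i, x i = ∑ i, y i) :
    ∑ i, k i * x i ≤ ∑ i, k i * y i := by
  have hterm : ∀ i, (k i - c) * x i ≤ (k i - c) * y i := by
    intro i
    rcases lt_trichotomy (k i) c with hlt | heq | hgt
    · rw [(hc i).1 hlt]
      exact mul_le_mul_of_nonpos_left (hy i).2 (sub_nonpos.2 hlt.le)
    · simp [heq]
    · rw [(hc i).2 hgt]
      exact mul_le_mul_of_nonneg_left (hy i).1 (sub_nonneg.2 hgt.le)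
  have hshifted : ∑ i, (k i - c) * x i ≤ ∑ i, (k i - c) * y i :=
    Finset.sum_le_sum fun i _ => hterm i
  simpa only [sub_mul, Finset.sum_sub_distrib, ← Finset.mul_sum, hxy, sub_le_sub_iff_right]
    using hshifted

theorem IsMeritOrder.sum_mul_le_sum_mul (hx : IsMeritOrder k q x)
    (hy : ∀ i, 0 ≤ y i ∧ y i ≤ q i) (hxy : ∑ i, x i = ∑ i, y i) :
    ∑ i, k i * x i ≤ ∑ i, k i * y i :=
  let ⟨_, hc⟩ := hx.exists_isClearingPrice
  hc.sum_mul_le_sum_mul hy hxy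

end Cost

section Dispatch

variable {ι G : Type*} [LinearOrder ι] [LocallyFiniteOrderBot ι]
  [AddCommGroup G] [LinearOrder G]

/-- The merit-order dispatch of units with capacities `q`, listed in merit order, against the demand
`D`: each unit serves as much as it can of the demand left over by its predecessors. -/
def meritOrderDispatch (q : ι → G) (D : G) (i : ι) : G :=
  min (q i) (max 0 (D - ∑ j ∈ Finset.Iio i, q j))

namespace meritOrderDispatch

variable {q : ι → G} {D : G}

theorem nonneg {i : ι} (hq : 0 ≤ q i) : 0 ≤ meritOrderDispatch q D i :=
  le_min hq (le_max_left _ _)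

theorem le_capacity (q : ι → G) (D : G) (i : ι) : meritOrderDispatch q D i ≤ q i :=
  min_le_left _ _

variable [IsOrderedAddMonoid G]

theorem eq_capacity_of_sum_Iic_le {i : ι} (h : ∑ j ∈ Finset.Iic i, q j ≤ D) :
    meritOrderDispatch q D i = q i := by
  rw [← Finset.sum_Iio_add_eq_sum_Iic, ← le_sub_iff_add_le'] at h
  exact min_eq_left (h.trans (le_max_right _ _))

theorem eq_zero_of_le_sum_Iio {i : ι} (hq : 0 ≤ q i) (h : D ≤ ∑ j ∈ Finset.Iio i, q j) :
    meritOrderDispatch q D i = 0 := by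
  rw [meritOrderDispatch, max_eq_left (sub_nonpos.2 h), min_eq_right hq]

theorem eq_capacity_or_eq_zero_of_lt (hq : ∀ i, 0 ≤ q i) {i j : ι} (hij : i < j) :
    meritOrderDispatch q D i = q i ∨ meritOrderDispatch q D j = 0 := by
  have hprefix : ∑ l ∈ Finset.Iic i, q l ≤ ∑ l ∈ Finset.Iio j, q l :=
    Finset.sum_le_sum_of_subset_of_nonneg
      (fun _ hl => Finset.mem_Iio.2 ((Finset.mem_Iic.1 hl).trans_lt hij)) fun l _ _ => hq l
  rcases le_total (∑ l ∈ Finset.Iic i, q l) D with hD | hD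
  · exact .inl (eq_capacity_of_sum_Iic_le hD)
  · exact .inr (eq_zero_of_le_sum_Iio (hq j) (hD.trans hprefix))

theorem isMeritOrder {P : Type*} [LinearOrder P] {k : ι → P} (hk : Monotone k)
    (hq : ∀ i, 0 ≤ q i) : IsMeritOrder k q (meritOrderDispatch q D) :=
  fun _ _ hij => eq_capacity_or_eq_zero_of_lt hq (hk.reflect_lt hij)

theorem add_min_sum_Iio {i : ι} (hq : 0 ≤ q i) :
    meritOrderDispatch q D i + min D (∑ j ∈ Finset.Iio i, q j) =
      min D (q i + ∑ j ∈ Finset.Iio i, q j) := by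
  rcases le_total D (∑ j ∈ Finset.Iio i, q j) with hD | hD
  · rw [eq_zero_of_le_sum_Iio hq hD, zero_add, min_eq_left hD,
      min_eq_left (hD.trans (le_add_of_nonneg_left hq))]
  · rw [meritOrderDispatch, max_eq_right (sub_nonneg.2 hD), min_eq_right hD, min_add,
      sub_add_cancel, min_comm]

theorem sum_eq_min_of_isLowerSet (hq : ∀ i, 0 ≤ q i) (hD : 0 ≤ D) {s : Finset ι}
    (hs : IsLowerSet (s : Set ι)) :
    ∑ i ∈ s, meritOrderDispatch q D i = min D (∑ i ∈ s, q i) := by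
  induction s using Finset.induction_on_max with
  | empty => simp [hD]
  | insert a s ha ih =>
    have has : a ∉ s := fun h => (ha a h).false
    have hIio : s = Finset.Iio a := by
      ext j
      refine ⟨fun hj => Finset.mem_Iio.2 (ha j hj), fun hj => ?_⟩
      have hja : j < a := Finset.mem_Iio.1 hj
      exact Finset.mem_of_mem_insert_of_ne (hs hja.le (Finset.mem_insert_self a s)) hja.ne
    have hlower : IsLowerSet (s : Set ι) := by
      rw [hIio, Finset.coe_Iio]
      exact isLowerSet_Iio a
    rw [Finset.sum_insert has, Finset.sum_insert has, ih hlower, hIio, add_min_sum_Iio (hq a)]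

theorem sum_eq_demand [Fintype ι] (hq : ∀ i, 0 ≤ q i) (hD0 : 0 ≤ D) (hD : D ≤ ∑ i, q i) :
    ∑ i, meritOrderDispatch q D i = D := by
  have huniv : IsLowerSet ((Finset.univ : Finset ι) : Set ι) := by
    simpa only [Finset.coe_univ] using isLowerSet_univ
  rw [sum_eq_min_of_isLowerSet hq hD0 huniv, min_eq_left hD]

end meritOrderDispatch

end Dispatch

theorem merit_order_dispatch_optimal_general {ι R : Type*} [LinearOrder ι] [Fintype ι]
    [LocallyFiniteOrderBot ι] [Ring R] [LinearOrder R] [IsOrderedRing R] {k q : ι → R} {D : R}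
    (hk : Monotone k) (hq : ∀ i, 0 ≤ q i) (hD0 : 0 ≤ D) (hD : D ≤ ∑ i, q i) :
    (∀ i, 0 ≤ meritOrderDispatch q D i ∧ meritOrderDispatch q D i ≤ q i) ∧
      ∑ i, meritOrderDispatch q D i = D ∧
      ∀ y : ι → R, (∀ i, 0 ≤ y i ∧ y i ≤ q i) → ∑ i, y i = D →
        ∑ i, k i * meritOrderDispatch q D i ≤ ∑ i, k i * y i := by
  have hsum : ∑ i, meritOrderDispatch q D i = D := meritOrderDispatch.sum_eq_demand hq hD0 hD
  refine ⟨fun i => ⟨meritOrderDispatch.nonneg (hq i), meritOrderDispatch.le_capacity q D i⟩,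
    hsum, fun y hy hyD => ?_⟩
  exact (meritOrderDispatch.isMeritOrder hk hq).sum_mul_le_sum_mul hy (hsum.trans hyD.symm)

/-- Dispatching capacities in order of increasing operating cost minimizes
total operating cost among all feasible dispatches meeting the demand. -/
theorem merit_order_dispatch_optimal (m : ℕ) (k q : Fin m → ℝ)
    (hk : ∀ i j : Fin m, i ≤ j → k i ≤ k j)
    (hq : ∀ i, 0 ≤ q i)
    (D : ℝ) (hD0 : 0 ≤ D) (hD : D ≤ ∑ i, q i) :
    let x : Fin m → ℝ := fun i => min (q i) (max 0 (D - ∑ j ∈ Finset.Iio i, q j))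
    (∀ i, 0 ≤ x i ∧ x i ≤ q i) ∧ (∑ i, x i = D) ∧
      (∀ y : Fin m → ℝ, (∀ i, 0 ≤ y i ∧ y i ≤ q i) → ∑ i, y i = D →
        ∑ i, k i * x i ≤ ∑ i, k i * y i) :=
  merit_order_dispatch_optimal_general hk hq hD0 hD
end
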